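/- arXiv:2409.00072 — 5 statements merged into one kernel-verified Lean document; each statement's English description precedes it below -/
import Mathlib

section
/- Let Σ and G be as in the Blanchard polynomial model described in the context. Then the quotient group Σ / G is a free abelian group of rank 4a, i.e. Σ / G ≅ ℤ^{4a}. -/
open Polynomial

/-- The fiberwise lattice `Γ(s) ⊆ ℂ²`, generated by the values at `s` of the four sections
`(σ₀, σ₁)`, `(i·σ₀, −i·σ₁)`, `(−σ₁, σ₀)`, `(−i·σ₁, −i·σ₀)` of the Blanchard construction. -/
noncomputable def Gam (σ₀ σ₁ : Polynomial ℂ) (s : ℂ) : AddSubgroup (ℂ × ℂ) :=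
  AddSubgroup.closure
    { (σ₀.eval s, σ₁.eval s),
      (Complex.I * σ₀.eval s, -(Complex.I * σ₁.eval s)),
      (-(σ₁.eval s), σ₀.eval s),
      (-(Complex.I * σ₁.eval s), -(Complex.I * σ₀.eval s)) }

/-- Evaluation of a pair of polynomials at `s`, as an additive group homomorphism. -/
noncomputable def evalPair (s : ℂ) : (Polynomial ℂ × Polynomial ℂ) →+ ℂ × ℂ :=
  AddMonoidHom.prodMap (Polynomial.evalRingHom s).toAddMonoidHom
    (Polynomial.evalRingHom s).toAddMonoidHom

/-- The group `Σ` of pairs `(p, q)` of polynomials of degree at most `a` whose value at each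
`tᵢ` lies in the lattice `Γ(tᵢ)`. -/
noncomputable def Sig (a : ℕ) (t : Fin (a + 1) → ℂ) (σ₀ σ₁ : Polynomial ℂ) :
    AddSubgroup (Polynomial ℂ × Polynomial ℂ) :=
  AddSubgroup.prod (Polynomial.degreeLE ℂ (a : WithBot ℕ)).toAddSubgroup
      (Polynomial.degreeLE ℂ (a : WithBot ℕ)).toAddSubgroup ⊓
    ⨅ i : Fin (a + 1), AddSubgroup.comap (evalPair (t i)) (Gam σ₀ σ₁ (t i))

/-- The subgroup `G` generated by the four pairs
`(σ₀, σ₁)`, `(i·σ₀, −i·σ₁)`, `(−σ₁, σ₀)`, `(−i·σ₁, −i·σ₀)`. -/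
noncomputable def Gsub (σ₀ σ₁ : Polynomial ℂ) : AddSubgroup (Polynomial ℂ × Polynomial ℂ) :=
  AddSubgroup.closure
    { (σ₀, σ₁),
      (Polynomial.C Complex.I * σ₀, -(Polynomial.C Complex.I * σ₁)),
      (-σ₁, σ₀),
      (-(Polynomial.C Complex.I * σ₁), -(Polynomial.C Complex.I * σ₀)) }

/-!
Interpolation at `t₀, …, t_a` identifies pairs of polynomials of degree at most `a` with arbitrary
families of values in `ℂ²`. At each `tᵢ` the four generators of `Γ(tᵢ)` are linearly independent
over `ℝ`: with `α = c₀ + c₁i` and `β = c₂ + c₃i`, the combination with real coefficients `c` is the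
matrix `!![α, -β; conj β, conj α]`, of determinant `|α|² + |β|²`, applied to `(σ₀(tᵢ), σ₁(tᵢ))`.
Hence `Σ ≅ (ℤ⁴)^{a+1}`, an element being recorded by its coordinates in each `Γ(tᵢ)`. An element of
`G` has the same coordinates at every `tᵢ`, so `G` is the diagonal `ℤ⁴`, and subtracting the
coordinates at `t₀` from the others identifies the quotient with `(ℤ⁴)^a`.
-/

theorem nonempty_range_quotient_map_equiv {B M : Type*} [AddCommGroup B] [AddCommGroup M]
    {Φ : B →+ M} (hΦ : Function.Injective Φ) (K : AddSubgroup B) :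
    Nonempty ((Φ.range ⧸ (K.map Φ).addSubgroupOf Φ.range) ≃+ (B ⧸ K)) := by
  refine ⟨(QuotientAddGroup.congr _ _ (AddMonoidHom.ofInjective hΦ) ?_).symm⟩
  ext ⟨x, hx⟩
  simp [AddSubgroup.mem_addSubgroupOf, Subtype.ext_iff, AddMonoidHom.ofInjective_apply]

theorem nonempty_pi_quotient_diagonal_equiv (n : ℕ) (A : Type*) [AddCommGroup A] :
    Nonempty (((Fin (n + 1) → A) ⧸ (Pi.constAddMonoidHom (Fin (n + 1)) A).range) ≃+
      (Fin n → A)) := by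
  let differences : (Fin (n + 1) → A) →+ (Fin n → A) :=
    AddMonoidHom.pi fun i =>
      Pi.evalAddMonoidHom (fun _ => A) i.succ - Pi.evalAddMonoidHom (fun _ => A) 0
  have differences_apply (c i) : differences c i = c i.succ - c 0 := rfl
  have surjective : Function.Surjective differences := fun d =>
    ⟨Fin.cons 0 d, funext fun i => by simp [differences_apply]⟩
  have ker_eq : (Pi.constAddMonoidHom (Fin (n + 1)) A).range = differences.ker := by
    ext c
    rw [AddMonoidHom.mem_ker, funext_iff]
    constructor
    · rintro ⟨b, rfl⟩ i
      simp [differences_apply]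
    · intro h
      exact ⟨c 0, funext (Fin.cases rfl fun i => (sub_eq_zero.mp (h i)).symm)⟩
  exact ⟨(QuotientAddGroup.quotientAddEquivOfEq ker_eq).trans
    (QuotientAddGroup.quotientKerEquivOfSurjective differences surjective)⟩

section Interpolation

variable {ι A M : Type*} {N : ι → Type*} [AddCommGroup A] [AddCommGroup M]
  [∀ i, AddCommGroup (N i)]

/-- Joint evaluation on `H` under a family of homomorphisms `e i`. Its bijectivity expresses that
every family of values is interpolated by exactly one element of `H`. -/
def jointEval (H : AddSubgroup M) (e : ∀ i, M →+ N i) : H →+ ∀ i, N i :=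
  (AddMonoidHom.pi e).comp H.subtype

variable {H : AddSubgroup M} {e : ∀ i, M →+ N i}

/-- The element of `H` whose value under `e i` is that of `L (c i)`, as a homomorphism in the family
of coordinates `c`. -/
noncomputable def interpolateCoords (he : Function.Bijective (jointEval H e)) (L : A →+ M) :
    (ι → A) →+ M :=
  H.subtype.comp <| (AddEquiv.ofBijective (jointEval H e) he).symm.toAddMonoidHom.comp <|
    AddMonoidHom.pi fun i => ((e i).comp L).comp (Pi.evalAddMonoidHom _ i)

variable (he : Function.Bijective (jointEval H e)) {L : A →+ M}

theorem eq_interpolateCoords_iff {x : M} {c : ι → A} :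
    x = interpolateCoords he L c ↔ x ∈ H ∧ ∀ i, e i x = e i (L (c i)) := by
  let E := AddEquiv.ofBijective (jointEval H e) he
  let values : ∀ i, N i := fun i => e i (L (c i))
  change x = E.symm values ↔ _
  constructor
  · rintro rfl
    exact ⟨(E.symm values).2, congrFun (E.apply_symm_apply values)⟩
  · rintro ⟨hx, hval⟩
    have : E ⟨x, hx⟩ = values := funext hval
    exact congrArg Subtype.val (E.eq_symm_apply.mpr this)

theorem interpolateCoords_injective (hL : ∀ i, Function.Injective ((e i).comp L)) :
    Function.Injective (interpolateCoords he L) := fun c d hcd => funext fun i => hL i <| by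
  have hc := ((eq_interpolateCoords_iff he).mp (Eq.refl (interpolateCoords he L c))).2 i
  have hd := ((eq_interpolateCoords_iff he).mp hcd).2 i
  exact hc.symm.trans hd

theorem range_interpolateCoords :
    (interpolateCoords he L).range = H ⊓ ⨅ i, ((e i).comp L).range.comap (e i) := by
  ext x
  simp only [AddMonoidHom.mem_range, AddSubgroup.mem_inf, AddSubgroup.mem_iInf,
    AddSubgroup.mem_comap, AddMonoidHom.comp_apply, Classical.skolem, ← exists_and_left]
  exact exists_congr fun c => by simp only [eq_comm, ← eq_interpolateCoords_iff he]

theorem map_diagonal_interpolateCoords (hLH : L.range ≤ H) :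
    (Pi.constAddMonoidHom ι A).range.map (interpolateCoords he L) = L.range := by
  have hconst : (interpolateCoords he L).comp (Pi.constAddMonoidHom ι A) = L := by
    ext b
    exact ((eq_interpolateCoords_iff he).mpr ⟨hLH ⟨b, rfl⟩, fun _ => rfl⟩).symm
  rw [AddMonoidHom.map_range, hconst]

end Interpolation

theorem nonempty_interpolants_quotient_equiv {n : ℕ} {A M : Type*} {N : Fin (n + 1) → Type*}
    [AddCommGroup A] [AddCommGroup M] [∀ i, AddCommGroup (N i)] {H : AddSubgroup M}
    {e : ∀ i, M →+ N i} {L : A →+ M} (he : Function.Bijective (jointEval H e))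
    (hLH : L.range ≤ H) (hL : ∀ i, Function.Injective ((e i).comp L)) :
    Nonempty ((↥(H ⊓ ⨅ i, ((e i).comp L).range.comap (e i)) ⧸
      L.range.addSubgroupOf (H ⊓ ⨅ i, ((e i).comp L).range.comap (e i))) ≃+ (Fin n → A)) := by
  obtain ⟨toDiagonal⟩ := nonempty_range_quotient_map_equiv (interpolateCoords_injective he hL)
    (Pi.constAddMonoidHom (Fin (n + 1)) A).range
  obtain ⟨toDifferences⟩ := nonempty_pi_quotient_diagonal_equiv n A
  rw [map_diagonal_interpolateCoords he hLH, range_interpolateCoords] at toDiagonal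
  exact ⟨toDiagonal.trans toDifferences⟩

section IntegerCombinations

variable {κ M N : Type*} [Fintype κ] [AddCommGroup M] [AddCommGroup N]

/-- The homomorphism sending integer coefficients to the combination of the vectors `v k`. -/
def zcombination (v : κ → M) : (κ → ℤ) →+ M :=
  (Fintype.linearCombination ℤ v).toAddMonoidHom

theorem range_zcombination (v : κ → M) :
    (zcombination v).range = AddSubgroup.closure (Set.range v) := by
  rw [← Submodule.span_int_eq_addSubgroupClosure, ← Fintype.range_linearCombination ℤ v]
  rfl

theorem zcombination_injective {v : κ → M} (hv : LinearIndependent ℤ v) :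
    Function.Injective (zcombination v) :=
  hv.fintypeLinearCombination_injective

theorem comp_zcombination (f : M →+ N) (v : κ → M) :
    f.comp (zcombination v) = zcombination (f ∘ v) := by
  ext c
  simp [zcombination, Fintype.linearCombination_apply]

end IntegerCombinations

section QuaternionFrame

/-- The four vectors generating the Blanchard lattice of `(u, v)`, with `j` in the role of the
imaginary unit: `Γ(s)` is the case of the values `σ₀(s)`, `σ₁(s)` in `ℂ`, and `G` that of the
polynomials `σ₀`, `σ₁` in `ℂ[X]`. -/
def quaternionFrame {R : Type*} [Ring R] (j u v : R) : Fin 4 → R × R :=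
  ![(u, v), (j * u, -(j * v)), (-v, u), (-(j * v), -(j * u))]

theorem range_quaternionFrame {R : Type*} [Ring R] (j u v : R) :
    Set.range (quaternionFrame j u v) =
      {(u, v), (j * u, -(j * v)), (-v, u), (-(j * v), -(j * u))} := by
  ext x
  simp only [quaternionFrame, Set.mem_range, Fin.exists_fin_succ, Set.mem_insert_iff,
    Set.mem_singleton_iff]
  simp [eq_comm]

open ComplexConjugate in
theorem eq_zero_of_quaternion_mul_eq_zero {α β u v : ℂ} (huv : (u, v) ≠ (0, 0))
    (hfst : α * u - β * v = 0) (hsnd : conj β * u + conj α * v = 0) : α = 0 ∧ β = 0 := by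
  have hu : (conj α * α + conj β * β) * u = 0 := by
    linear_combination conj α * hfst + β * hsnd
  have hv : (conj α * α + conj β * β) * v = 0 := by
    linear_combination α * hsnd - conj β * hfst
  have hnorm : conj α * α + conj β * β = 0 := by
    by_contra hne
    exact huv (Prod.ext ((mul_eq_zero_iff_left hne).mp hu) ((mul_eq_zero_iff_left hne).mp hv))
  rw [← Complex.normSq_eq_conj_mul_self, ← Complex.normSq_eq_conj_mul_self] at hnorm
  have hnormSq : Complex.normSq α + Complex.normSq β = 0 := mod_cast hnorm
  rwa [add_eq_zero_iff_of_nonneg (Complex.normSq_nonneg α) (Complex.normSq_nonneg β),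
    Complex.normSq_eq_zero, Complex.normSq_eq_zero] at hnormSq

theorem linearIndependent_quaternionFrame {u v : ℂ} (huv : (u, v) ≠ (0, 0)) :
    LinearIndependent ℝ (quaternionFrame Complex.I u v) := by
  rw [Fintype.linearIndependent_iff]
  intro c hc
  have hfst : c 0 * u + c 1 * (Complex.I * u) - c 2 * v - c 3 * (Complex.I * v) = 0 := by
    simpa [Fin.sum_univ_four, quaternionFrame, ← sub_eq_add_neg] using congrArg Prod.fst hc
  have hsnd : c 0 * v - c 1 * (Complex.I * v) + c 2 * u - c 3 * (Complex.I * u) = 0 := by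
    simpa [Fin.sum_univ_four, quaternionFrame, ← sub_eq_add_neg] using congrArg Prod.snd hc
  obtain ⟨hα, hβ⟩ := eq_zero_of_quaternion_mul_eq_zero (α := ⟨c 0, c 1⟩) (β := ⟨c 2, c 3⟩) huv
    (by rw [Complex.mk_eq_add_mul_I, Complex.mk_eq_add_mul_I]; linear_combination hfst)
    (by
      simp only [Complex.mk_eq_add_mul_I, map_add, map_mul, Complex.conj_ofReal, Complex.conj_I]
      linear_combination hsnd)
  simp only [Complex.ext_iff, Complex.zero_re, Complex.zero_im] at hα hβ
  simp [Fin.forall_fin_succ, hα, hβ]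

end QuaternionFrame

section PolynomialPairs

/-- The pairs of complex polynomials of degree at most `a`, the global sections of
`O(a) ⊕ O(a)`. -/
noncomputable def degreeLEPairs (a : ℕ) : AddSubgroup (ℂ[X] × ℂ[X]) :=
  (degreeLE ℂ a).toAddSubgroup.prod (degreeLE ℂ a).toAddSubgroup

theorem mem_degreeLE_and_eval_eq_iff {F : Type*} [Field F] {n : ℕ} {t : Fin (n + 1) → F}
    (ht : Function.Injective t) {r : Fin (n + 1) → F} {p : F[X]} :
    (p ∈ degreeLE F n ∧ ∀ i, p.eval (t i) = r i) ↔ p = Lagrange.interpolate Finset.univ t r := by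
  rw [← Lagrange.eq_interpolate_iff r ht.injOn, ← degreeLT_succ_eq_degreeLE, mem_degreeLT]
  simp

theorem jointEval_evalPair_bijective {a : ℕ} {t : Fin (a + 1) → ℂ} (ht : Function.Injective t) :
    Function.Bijective (jointEval (degreeLEPairs a) fun i => evalPair (t i)) := by
  rw [Function.bijective_iff_existsUnique]
  intro y
  let p := Lagrange.interpolate Finset.univ t fun i => (y i).1
  let q := Lagrange.interpolate Finset.univ t fun i => (y i).2
  obtain ⟨hp, hpy⟩ := (mem_degreeLE_and_eval_eq_iff ht).mpr (Eq.refl p)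
  obtain ⟨hq, hqy⟩ := (mem_degreeLE_and_eval_eq_iff ht).mpr (Eq.refl q)
  refine ⟨⟨(p, q), hp, hq⟩, funext fun i => Prod.ext (hpy i) (hqy i), ?_⟩
  rintro ⟨⟨p', q'⟩, hp', hq'⟩ rfl
  exact Subtype.ext <| Prod.ext
    ((mem_degreeLE_and_eval_eq_iff ht).mp ⟨hp', fun _ => rfl⟩)
    ((mem_degreeLE_and_eval_eq_iff ht).mp ⟨hq', fun _ => rfl⟩)

variable {a : ℕ} {σ₀ σ₁ : ℂ[X]}

theorem Gsub_le_degreeLEPairs (h0 : σ₀.degree ≤ a) (h1 : σ₁.degree ≤ a) :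
    Gsub σ₀ σ₁ ≤ degreeLEPairs a := by
  have hσ₀ : σ₀ ∈ degreeLE ℂ a := mem_degreeLE.mpr h0
  have hσ₁ : σ₁ ∈ degreeLE ℂ a := mem_degreeLE.mpr h1
  have hIσ₀ : C Complex.I * σ₀ ∈ degreeLE ℂ a := C_mul' Complex.I σ₀ ▸ Submodule.smul_mem _ _ hσ₀
  have hIσ₁ : C Complex.I * σ₁ ∈ degreeLE ℂ a := C_mul' Complex.I σ₁ ▸ Submodule.smul_mem _ _ hσ₁
  rw [Gsub, AddSubgroup.closure_le]
  rintro _ (rfl | rfl | rfl | rfl)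
  · exact ⟨hσ₀, hσ₁⟩
  · exact ⟨hIσ₀, Submodule.neg_mem _ hIσ₁⟩
  · exact ⟨Submodule.neg_mem _ hσ₁, hσ₀⟩
  · exact ⟨Submodule.neg_mem _ hIσ₁, Submodule.neg_mem _ hIσ₀⟩

variable (σ₀ σ₁)

/-- The homomorphism sending integer coefficients to the combination of the four generating
sections of `G`. -/
noncomputable def blanchardSection : (Fin 4 → ℤ) →+ ℂ[X] × ℂ[X] :=
  zcombination (quaternionFrame (C Complex.I) σ₀ σ₁)

theorem range_blanchardSection : (blanchardSection σ₀ σ₁).range = Gsub σ₀ σ₁ := by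
  rw [blanchardSection, range_zcombination, range_quaternionFrame, Gsub]

theorem evalPair_comp_blanchardSection (s : ℂ) :
    (evalPair s).comp (blanchardSection σ₀ σ₁) =
      zcombination (quaternionFrame Complex.I (σ₀.eval s) (σ₁.eval s)) := by
  rw [blanchardSection, comp_zcombination]
  congr 1
  ext k <;> fin_cases k <;> simp [quaternionFrame, evalPair]

theorem range_evalPair_comp_blanchardSection (s : ℂ) :
    ((evalPair s).comp (blanchardSection σ₀ σ₁)).range = Gam σ₀ σ₁ s := by
  rw [evalPair_comp_blanchardSection, range_zcombination, range_quaternionFrame, Gam]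

theorem Sig_eq_inf_iInf_comap_range (a : ℕ) (t : Fin (a + 1) → ℂ) :
    Sig a t σ₀ σ₁ = degreeLEPairs a ⊓
      ⨅ i, ((evalPair (t i)).comp (blanchardSection σ₀ σ₁)).range.comap (evalPair (t i)) := by
  simp only [range_evalPair_comp_blanchardSection, Sig, degreeLEPairs]

variable {σ₀ σ₁}

theorem evalPair_comp_blanchardSection_injective {s : ℂ}
    (hs : (σ₀.eval s, σ₁.eval s) ≠ (0, 0)) :
    Function.Injective ((evalPair s).comp (blanchardSection σ₀ σ₁)) := by
  rw [evalPair_comp_blanchardSection]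
  exact zcombination_injective ((linearIndependent_quaternionFrame hs).restrict_scalars' ℤ)

end PolynomialPairs

/-- In the Blanchard polynomial model, the quotient group `Σ / G` is a free
abelian group of rank `4a`, i.e. `Σ / G ≅ ℤ^{4a}`. -/
theorem sigma_quotient_G_free_abelian_rank_four_a
    (a : ℕ) (ha : 1 ≤ a) (t : Fin (a + 1) → ℂ) (ht : Function.Injective t)
    (σ₀ σ₁ : Polynomial ℂ)
    (h0 : σ₀.degree ≤ (a : WithBot ℕ)) (h1 : σ₁.degree ≤ (a : WithBot ℕ))
    (hnz : ∀ i, (σ₀.eval (t i), σ₁.eval (t i)) ≠ (0, 0)) :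
    Nonempty
      ((↥(Sig a t σ₀ σ₁) ⧸ (Gsub σ₀ σ₁).addSubgroupOf (Sig a t σ₀ σ₁)) ≃+ (Fin (4 * a) → ℤ)) := by
  have hG : (blanchardSection σ₀ σ₁).range ≤ degreeLEPairs a :=
    (range_blanchardSection σ₀ σ₁).trans_le (Gsub_le_degreeLEPairs h0 h1)
  obtain ⟨toCoordDifferences⟩ := nonempty_interpolants_quotient_equiv
    (jointEval_evalPair_bijective ht) hG fun i => evalPair_comp_blanchardSection_injective (hnz i)
  have flatten : (Fin a → Fin 4 → ℤ) ≃ₗ[ℤ] (Fin (4 * a) → ℤ) :=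
    LinearEquiv.ofFinrankEq _ _ (by simp [Module.finrank_pi_fintype, mul_comm])
  rw [Sig_eq_inf_iInf_comap_range, ← range_blanchardSection]
  exact ⟨toCoordDifferences.trans flatten.toAddEquiv⟩
end

section
/- Let Σ and Γ(tᵢ) be as in the Blanchard polynomial model described in the context. Then the evaluation map (p, q) ↦ ((p(t₀), q(t₀)), …, (p(t_a), q(t_a))) restricts to an isomorphism of additive groups from Σ onto the product Γ(t₀) × ⋯ × Γ(t_a); in particular Σ is a free abelian group of rank 4(a+1), i.e. Σ ≅ ℤ^{4a+4}. -/
open Polynomial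

/-!
By Lagrange interpolation, evaluation at `t₀, …, t_a` identifies the pairs of polynomials of degree
at most `a` with `(ℂ²)^(a+1)`, and hence those taking their values in prescribed subgroups of `ℂ²`
with the product of these subgroups. The group `Γ(s)` has rank four because the combination of its
generators with real coefficients `c₀, …, c₃` is the image of `(σ₀(s), σ₁(s))` under the matrix of a
quaternion, whose determinant `c₀² + c₁² + c₂² + c₃²` vanishes only if all `cᵢ` do.
-/

section SubgroupsOfAProduct

variable {ι A : Type*} {B : ι → Type*} [AddGroup A] [∀ i, AddGroup (B i)]

/-- If the homomorphisms `f i` jointly identify the subgroup `D` with the product of the groups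
`B i`, they identify the elements of `D` whose images lie in prescribed subgroups `L i ≤ B i` with
the product of the `L i`. -/
noncomputable def infComapEquivPi (D : AddSubgroup A) (f : ∀ i, A →+ B i)
    (L : ∀ i, AddSubgroup (B i)) (hf : ∀ b : ∀ i, B i, ∃! x, x ∈ D ∧ ∀ i, f i x = b i) :
    ↥(D ⊓ ⨅ i, (L i).comap (f i)) ≃+ ∀ i, L i :=
  have map_mem (x : ↥(D ⊓ ⨅ i, (L i).comap (f i))) (i : ι) : f i x ∈ L i :=
    AddSubgroup.mem_iInf.mp x.2.2 i
  AddEquiv.ofBijective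
    (AddMonoidHom.pi fun i => ((f i).comp (AddSubgroup.subtype _)).codRestrict (L i)
      fun x => map_mem x i) <| by
    refine (Function.bijective_iff_existsUnique _).mpr fun g => ?_
    obtain ⟨x, ⟨hxD, hxg⟩, hx_unique⟩ := hf fun i => g i
    have hxL : x ∈ ⨅ i, (L i).comap (f i) :=
      AddSubgroup.mem_iInf.mpr fun i => by simp [hxg i]
    refine ⟨⟨x, hxD, hxL⟩, funext fun i => Subtype.ext (hxg i), fun y hy => Subtype.ext ?_⟩
    exact hx_unique y ⟨y.2.1, fun i => congrArg Subtype.val (congrFun hy i)⟩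

end SubgroupsOfAProduct

theorem existsUnique_degree_lt_card_eval_eq {K ι : Type*} [Field K] [Fintype ι] {t : ι → K}
    (ht : Function.Injective t) (r : ι → K) :
    ∃! p : K[X], p.degree < Fintype.card ι ∧ ∀ i, p.eval (t i) = r i := by
  classical
  have iff_eq_interpolate (p : K[X]) :
      (p.degree < Fintype.card ι ∧ ∀ i, p.eval (t i) = r i) ↔
        p = Lagrange.interpolate Finset.univ t r := by
    simpa using Lagrange.eq_interpolate_iff r (f := p) (s := Finset.univ) ht.injOn
  exact ⟨_, (iff_eq_interpolate _).mpr rfl, fun p => (iff_eq_interpolate p).mp⟩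

theorem existsUnique_degree_le_evalPair_eq {a : ℕ} {t : Fin (a + 1) → ℂ} (ht : Function.Injective t)
    (b : Fin (a + 1) → ℂ × ℂ) :
    ∃! x, x ∈ (degreeLE ℂ a).toAddSubgroup.prod (degreeLE ℂ a).toAddSubgroup ∧
      ∀ i, evalPair (t i) x = b i := by
  have mem_iff (p : ℂ[X]) : p ∈ (degreeLE ℂ a).toAddSubgroup ↔
      p.degree < Fintype.card (Fin (a + 1)) := by
    rw [Submodule.mem_toAddSubgroup, ← degreeLT_succ_eq_degreeLE, mem_degreeLT, Fintype.card_fin]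
  obtain ⟨p, ⟨hp, hpb⟩, hp_unique⟩ := existsUnique_degree_lt_card_eval_eq ht fun i => (b i).1
  obtain ⟨q, ⟨hq, hqb⟩, hq_unique⟩ := existsUnique_degree_lt_card_eval_eq ht fun i => (b i).2
  refine ⟨(p, q), ⟨⟨(mem_iff p).mpr hp, (mem_iff q).mpr hq⟩, fun i => Prod.ext (hpb i) (hqb i)⟩, ?_⟩
  rintro ⟨p', q'⟩ ⟨⟨hp', hq'⟩, hb⟩
  exact Prod.ext
    (hp_unique p' ⟨(mem_iff p').mp hp', fun i => congrArg Prod.fst (hb i)⟩)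
    (hq_unique q' ⟨(mem_iff q').mp hq', fun i => congrArg Prod.snd (hb i)⟩)

/-- The evaluation isomorphism `Σ ≃ Γ(t₀) × ⋯ × Γ(t_a)`. -/
noncomputable def sigEquivPiGam {a : ℕ} {t : Fin (a + 1) → ℂ} (ht : Function.Injective t)
    (σ₀ σ₁ : ℂ[X]) : Sig a t σ₀ σ₁ ≃+ ∀ i, Gam σ₀ σ₁ (t i) :=
  infComapEquivPi _ (fun i => evalPair (t i)) _ (existsUnique_degree_le_evalPair_eq ht)

section Lattice

open Complex

/-- The generators `v₁, …, v₄` of the lattice `Γ(s)`, as functions of `(x, y) = (σ₀(s), σ₁(s))`. -/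
noncomputable def latticeGenerators (x y : ℂ) : Fin 4 → ℂ × ℂ :=
  ![(x, y), (I * x, -(I * y)), (-y, x), (-(I * y), -(I * x))]

theorem Gam_eq_closure_range (σ₀ σ₁ : ℂ[X]) (s : ℂ) :
    Gam σ₀ σ₁ s =
      AddSubgroup.closure (Set.range (latticeGenerators (σ₀.eval s) (σ₁.eval s))) := by
  simp only [Gam, latticeGenerators, Matrix.range_cons, Matrix.range_empty, Set.union_empty,
    Set.singleton_union]

/-- The matrix of the quaternion with real coordinates `c`, which maps `(x, y)` to the combination
of `latticeGenerators x y` with coefficients `c`. -/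
noncomputable def quaternionMatrix (c : Fin 4 → ℝ) : Matrix (Fin 2) (Fin 2) ℂ :=
  !![c 0 + c 1 * I, -(c 2 + c 3 * I); c 2 - c 3 * I, c 0 - c 1 * I]

theorem det_quaternionMatrix (c : Fin 4 → ℝ) :
    (quaternionMatrix c).det = ((∑ i, c i ^ 2 : ℝ) : ℂ) := by
  rw [quaternionMatrix, Matrix.det_fin_two_of, Fin.sum_univ_four]
  push_cast
  linear_combination (-(c 1 : ℂ) ^ 2 - (c 3 : ℂ) ^ 2) * I_sq

theorem det_quaternionMatrix_eq_zero_iff {c : Fin 4 → ℝ} :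
    (quaternionMatrix c).det = 0 ↔ ∀ i, c i = 0 := by
  rw [det_quaternionMatrix, ofReal_eq_zero, Finset.sum_eq_zero_iff_of_nonneg fun i _ => sq_nonneg _]
  simp only [Finset.mem_univ, forall_const, sq_eq_zero_iff]

theorem quaternionMatrix_mulVec (c : Fin 4 → ℝ) (x y : ℂ) :
    (quaternionMatrix c).mulVec ![x, y] =
      ![(∑ i, c i • latticeGenerators x y i).1, (∑ i, c i • latticeGenerators x y i).2] := by
  simp only [quaternionMatrix, latticeGenerators, Fin.sum_univ_four, Matrix.cons_mulVec,
    Matrix.empty_mulVec, Matrix.cons_dotProduct_cons, Matrix.dotProduct_of_isEmpty,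
    Matrix.cons_val, Prod.fst_add, Prod.snd_add, Prod.smul_fst, Prod.smul_snd, real_smul]
  congr! 1
  · ring
  · congr! 1
    ring

theorem linearIndependent_latticeGenerators {x y : ℂ} (hxy : (x, y) ≠ (0, 0)) :
    LinearIndependent ℝ (latticeGenerators x y) := by
  refine Fintype.linearIndependent_iff.mpr fun c hc => det_quaternionMatrix_eq_zero_iff.mp ?_
  have vec_ne_zero : ![x, y] ≠ 0 := fun h => hxy (Prod.ext (congrFun h 0) (congrFun h 1))
  have mulVec_eq_zero : (quaternionMatrix c).mulVec ![x, y] = 0 := by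
    rw [quaternionMatrix_mulVec, hc]
    simp
  exact Matrix.exists_mulVec_eq_zero_iff.mp ⟨![x, y], vec_ne_zero, mulVec_eq_zero⟩

end Lattice

/-- The isomorphism between the subgroup generated by a `ℤ`-linearly independent family and the
group of its integral coefficient vectors. -/
noncomputable def closureRangeEquiv {ι M : Type*} [Finite ι] [AddCommGroup M] {v : ι → M}
    (hv : LinearIndependent ℤ v) : AddSubgroup.closure (Set.range v) ≃+ (ι → ℤ) :=
  (AddEquiv.addSubgroupCongr (Submodule.span_int_eq_addSubgroupClosure _).symm).trans
    (Module.Basis.span hv).equivFun.toAddEquiv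

/-- The coordinates on `Γ(s)` with respect to its four generators. -/
noncomputable def gamEquiv {σ₀ σ₁ : ℂ[X]} {s : ℂ} (h : (σ₀.eval s, σ₁.eval s) ≠ (0, 0)) :
    Gam σ₀ σ₁ s ≃+ (Fin 4 → ℤ) :=
  (AddEquiv.addSubgroupCongr (Gam_eq_closure_range σ₀ σ₁ s)).trans
    (closureRangeEquiv ((linearIndependent_latticeGenerators h).restrict_scalars' ℤ))

/-- Concatenation of `m` vectors of length `n`. -/
def concatEquiv (M : Type*) [AddCommMonoid M] (m n : ℕ) :
    (Fin m → Fin n → M) ≃+ (Fin (m * n) → M) :=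
  ((LinearEquiv.curry ℕ M (Fin m) (Fin n)).symm.trans
    (LinearEquiv.funCongrLeft ℕ M finProdFinEquiv.symm)).toAddEquiv

theorem sigma_eval_equiv_prod_lattices_general
    (a : ℕ) (t : Fin (a + 1) → ℂ) (ht : Function.Injective t) (σ₀ σ₁ : ℂ[X])
    (hnz : ∀ i, (σ₀.eval (t i), σ₁.eval (t i)) ≠ (0, 0)) :
    (∃ e : Sig a t σ₀ σ₁ ≃+ (∀ i, Gam σ₀ σ₁ (t i)),
        ∀ (x : Sig a t σ₀ σ₁) (i : Fin (a + 1)),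
          (e x i : ℂ × ℂ) = ((x : ℂ[X] × ℂ[X]).1.eval (t i), (x : ℂ[X] × ℂ[X]).2.eval (t i))) ∧
      Nonempty (Sig a t σ₀ σ₁ ≃+ (Fin (4 * a + 4) → ℤ)) := by
  refine ⟨⟨sigEquivPiGam ht σ₀ σ₁, fun _ _ => rfl⟩, ?_⟩
  have rank_eq : (a + 1) * 4 = 4 * a + 4 := by ring
  rw [← rank_eq]
  exact ⟨((sigEquivPiGam ht σ₀ σ₁).trans (AddEquiv.piCongrRight fun i => gamEquiv (hnz i))).trans
    (concatEquiv ℤ (a + 1) 4)⟩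

/-- The evaluation map `(p, q) ↦ ((p(t₀), q(t₀)), …, (p(t_a), q(t_a)))`
restricts to an isomorphism of additive groups from `Σ` onto `Γ(t₀) × ⋯ × Γ(t_a)`;
in particular `Σ` is free abelian of rank `4(a+1)`, i.e. `Σ ≅ ℤ^{4a+4}`. -/
theorem sigma_eval_equiv_prod_lattices
    (a : ℕ) (ha : 1 ≤ a) (t : Fin (a + 1) → ℂ) (ht : Function.Injective t)
    (σ₀ σ₁ : Polynomial ℂ)
    (h0 : σ₀.degree ≤ (a : WithBot ℕ)) (h1 : σ₁.degree ≤ (a : WithBot ℕ))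
    (hnz : ∀ i, (σ₀.eval (t i), σ₁.eval (t i)) ≠ (0, 0)) :
    (∃ e : ↥(Sig a t σ₀ σ₁) ≃+ (∀ i : Fin (a + 1), ↥(Gam σ₀ σ₁ (t i))),
        ∀ x : ↥(Sig a t σ₀ σ₁), ∀ i : Fin (a + 1),
          ((e x i : ℂ × ℂ)) =
            ((x : Polynomial ℂ × Polynomial ℂ).1.eval (t i),
             (x : Polynomial ℂ × Polynomial ℂ).2.eval (t i))) ∧
      Nonempty (↥(Sig a t σ₀ σ₁) ≃+ (Fin (4 * a + 4) → ℤ)) :=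
  sigma_eval_equiv_prod_lattices_general a t ht σ₀ σ₁ hnz
end

section
/- Let Γ(s) and G be as in the context. If (p, q) is a pair of complex polynomials of degree at most a such that (p(s), q(s)) ∈ Γ(s) for every s ∈ ℂ, then (p, q) belongs to G, i.e. (p, q) is a ℤ-linear combination of the four pairs (σ₀, σ₁), (i·σ₀, −i·σ₁), (−σ₁, σ₀), (−i·σ₁, −i·σ₀). Conversely, every element of G satisfies (p(s), q(s)) ∈ Γ(s) for every s ∈ ℂ. -/
open Polynomial

/-!
Evaluation at `s` carries `G` onto `Γ(s)`, so a pair `x` with values in every `Γ(s)` agrees at each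
`s` with some element of `G`. Since `G` is countable and `ℂ` is not, a single `y ∈ G` must agree
with `x` at uncountably many points, and two pairs of polynomials that agree at infinitely many
points are equal.
-/

theorem countable_addSubgroup_closure {A : Type*} [AddGroup A] {s : Set A} (hs : s.Countable) :
    (AddSubgroup.closure s : Set A).Countable := by
  have := hs.to_subtype
  have : Countable (FreeAddGroup s) := Quot.mk_surjective.countable
  rw [← Subtype.range_coe (s := s), ← FreeAddGroup.range_lift_eq_closure, AddMonoidHom.coe_range]
  exact Set.countable_range _

theorem mem_iff_forall_mem_image_of_countable {ι A B : Type*} {f : ι → A → B}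
    (hf : ∀ x y, x ≠ y → {i | f i x = f i y}.Countable) {H : Set A} (hH : H.Countable)
    {S : Set ι} (hS : ¬S.Countable) {x : A} :
    x ∈ H ↔ ∀ i ∈ S, f i x ∈ f i '' H := by
  refine ⟨fun hx i _ ↦ Set.mem_image_of_mem _ hx, fun h ↦ ?_⟩
  by_contra hx
  have hcover : S ⊆ ⋃ y ∈ H, {i | f i y = f i x} := fun i hi ↦ by
    simpa using h i hi
  exact hS (.mono hcover (hH.biUnion fun y hy ↦ hf y x (ne_of_mem_of_not_mem hy hx)))

theorem finite_setOf_eval_eq {R : Type*} [CommRing R] [IsDomain R] {p q : R[X]} (hpq : p ≠ q) :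
    {s | p.eval s = q.eval s}.Finite :=
  Set.not_infinite.1 <| mt (eq_of_infinite_eval_eq p q) hpq

theorem finite_setOf_evalPair_eq {x y : ℂ[X] × ℂ[X]} (hxy : x ≠ y) :
    {s | evalPair s x = evalPair s y}.Finite := by
  rcases not_and_or.1 (mt Prod.ext_iff.2 hxy) with hfst | hsnd
  · exact (finite_setOf_eval_eq hfst).subset fun s hs ↦ congrArg Prod.fst hs
  · exact (finite_setOf_eval_eq hsnd).subset fun s hs ↦ congrArg Prod.snd hs

theorem Gam_eq_map_evalPair (σ₀ σ₁ : ℂ[X]) (s : ℂ) :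
    Gam σ₀ σ₁ s = (Gsub σ₀ σ₁).map (evalPair s) := by
  simp [Gam, Gsub, evalPair, AddMonoidHom.map_closure, Set.image_insert_eq]

theorem countable_Gsub (σ₀ σ₁ : ℂ[X]) : (Gsub σ₀ σ₁ : Set (ℂ[X] × ℂ[X])).Countable :=
  countable_addSubgroup_closure (Set.toFinite _).countable

theorem pair_in_all_lattices_iff_mem_G_general (σ₀ σ₁ : ℂ[X]) {S : Set ℂ} (hS : ¬S.Countable)
    (x : ℂ[X] × ℂ[X]) :
    (∀ s ∈ S, (x.1.eval s, x.2.eval s) ∈ Gam σ₀ σ₁ s) ↔ x ∈ Gsub σ₀ σ₁ := by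
  simp only [Gam_eq_map_evalPair]
  exact (mem_iff_forall_mem_image_of_countable
    (fun _ _ hxy ↦ (finite_setOf_evalPair_eq hxy).countable) (countable_Gsub σ₀ σ₁) hS).symm

/-- A pair `(p, q)` of polynomials of degree at most `a` satisfies
`(p(s), q(s)) ∈ Γ(s)` for every `s ∈ ℂ` if and only if it belongs to `G`, i.e. it is a
`ℤ`-linear combination of `(σ₀, σ₁)`, `(i·σ₀, −i·σ₁)`, `(−σ₁, σ₀)`, `(−i·σ₁, −i·σ₀)`;
conversely every element of `G` takes values in the lattices `Γ(s)`. -/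
theorem pair_in_all_lattices_iff_mem_G
    (a : ℕ) (ha : 1 ≤ a) (σ₀ σ₁ : Polynomial ℂ)
    (h0 : σ₀.degree ≤ (a : WithBot ℕ)) (h1 : σ₁.degree ≤ (a : WithBot ℕ)) :
    (∀ p q : Polynomial ℂ, p.degree ≤ (a : WithBot ℕ) → q.degree ≤ (a : WithBot ℕ) →
        (∀ s : ℂ, (p.eval s, q.eval s) ∈ Gam σ₀ σ₁ s) → (p, q) ∈ Gsub σ₀ σ₁) ∧
      ∀ x ∈ Gsub σ₀ σ₁, ∀ s : ℂ,
        ((x : Polynomial ℂ × Polynomial ℂ).1.eval s,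
         (x : Polynomial ℂ × Polynomial ℂ).2.eval s) ∈ Gam σ₀ σ₁ s := by
  have mem_iff := pair_in_all_lattices_iff_mem_G_general σ₀ σ₁ not_countable_complex
  exact ⟨fun p q _ _ h ↦ (mem_iff (p, q)).1 fun s _ ↦ h s,
    fun x hx s ↦ (mem_iff x).2 hx s (Set.mem_univ s)⟩
end

section
/- Let Σ, G and Γ(s) be as in the Blanchard polynomial model described in the context. Then the set of points s ∈ ℂ for which there exists a pair (p, q) ∈ Σ ∖ G with (p(s), q(s)) ∈ Γ(s) is countable. Consequently, for every s outside a countable subset of ℂ one has { (p, q) ∈ Σ : (p(s), q(s)) ∈ Γ(s) } = G. -/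
open Polynomial

/-! Lagrange interpolation embeds `Σ` into the product of the countable groups `Γ(tᵢ)`, so `Σ` is
countable. Since `Γ(s)` consists of the values at `s` of the elements of `G`, a point `s` is
exceptional exactly when it is a common zero of the two components of `x - g` for some
`x ∈ Σ ∖ G` and `g ∈ G`. There are countably many such differences, each of them nonzero and hence
with finitely many zeros. -/

theorem countable_addSubgroup_closure_s3 {A : Type*} [AddCommGroup A] {S : Set A}
    (hS : S.Countable) : (AddSubgroup.closure S : Set A).Countable := by
  have : Countable S := hS.to_subtype
  have hspan : Countable (Submodule.span ℤ (Set.range ((↑) : S → A))) := inferInstance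
  rw [Subtype.range_coe] at hspan
  rw [← Submodule.span_int_eq_addSubgroupClosure]
  exact hspan.to_set

section EvaluationFamily

variable {S M N : Type*} [AddGroup M] [AddGroup N] {H G : AddSubgroup M}

theorem countable_setOf_exists_notMem_apply_mem_map {ev : S → M →+ N}
    (hev : ∀ x ≠ 0, {s | ev s x = 0}.Countable)
    (hH : (H : Set M).Countable) (hG : (G : Set M).Countable) :
    {s | ∃ x ∈ H, x ∉ G ∧ ev s x ∈ G.map (ev s)}.Countable := by
  have hunion : (⋃ x ∈ (H \ G : Set M), ⋃ g ∈ (G : Set M), {s | ev s (x - g) = 0}).Countable :=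
    (hH.mono Set.sdiff_subset).biUnion fun x hx => hG.biUnion fun g hg =>
      hev (x - g) (sub_ne_zero.2 fun hxg => hx.2 (hxg ▸ hg))
  refine hunion.mono ?_
  rintro s ⟨x, hxH, hxG, g, hg, hgx⟩
  have hzero : ev s (x - g) = 0 := by rw [map_sub, hgx, sub_self]
  exact Set.mem_biUnion ⟨hxH, hxG⟩ (Set.mem_biUnion hg hzero)

theorem setOf_mem_and_apply_mem_map_eq {f : M →+ N} (hGH : G ≤ H)
    (hf : ¬∃ x ∈ H, x ∉ G ∧ f x ∈ G.map f) : {x | x ∈ H ∧ f x ∈ G.map f} = (G : Set M) := by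
  refine Set.Subset.antisymm ?_ fun x hx => ⟨hGH hx, AddSubgroup.mem_map_of_mem f hx⟩
  rintro x ⟨hxH, hfx⟩
  by_contra hxG
  exact hf ⟨x, hxH, hxG, hfx⟩

end EvaluationFamily

section PolynomialPairs

variable {R ι : Type*} [CommRing R]

/-- Evaluation at `s` of a pair of polynomials over an arbitrary commutative ring, as an additive
homomorphism. Over `ℂ` it is definitionally `evalPair s`. -/
noncomputable def evalProd (s : R) : R[X] × R[X] →+ R × R :=
  AddMonoidHom.prodMap (evalRingHom s).toAddMonoidHom (evalRingHom s).toAddMonoidHom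

/-- The group of pairs of polynomials of degree less than `n` whose value at each node `t i` lies in
the prescribed group `L i`. The group `Σ` is the case of `a + 1` nodes with `n = a + 1` and
`L i = Γ(tᵢ)`. -/
noncomputable def interpolationGroup (n : ℕ) (t : ι → R) (L : ι → AddSubgroup (R × R)) :
    AddSubgroup (R[X] × R[X]) :=
  AddSubgroup.prod (degreeLT R n).toAddSubgroup (degreeLT R n).toAddSubgroup ⊓
    ⨅ i, (L i).comap (evalProd (t i))

theorem mem_interpolationGroup {n : ℕ} {t : ι → R} {L : ι → AddSubgroup (R × R)}
    {x : R[X] × R[X]} :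
    x ∈ interpolationGroup n t L ↔
      (x.1.degree < n ∧ x.2.degree < n) ∧ ∀ i, (x.1.eval (t i), x.2.eval (t i)) ∈ L i := by
  simp [interpolationGroup, evalProd, AddSubgroup.mem_prod, AddSubgroup.mem_iInf, mem_degreeLT,
    Prod.map]

variable [IsDomain R]

theorem finite_setOf_evalProd_eq_zero {x : R[X] × R[X]} (hx : x ≠ 0) :
    {s | evalProd s x = 0}.Finite := by
  by_cases hfst : x.1 = 0
  · have hsnd : x.2 ≠ 0 := fun hsnd => hx (Prod.ext hfst hsnd)
    exact (finite_setOfPred_isRoot hsnd).subset fun s hs => congrArg Prod.snd hs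
  · exact (finite_setOfPred_isRoot hfst).subset fun s hs => congrArg Prod.fst hs

variable [Fintype ι] {n : ℕ} {t : ι → R}

theorem countable_setOf_degree_lt_and_eval_mem (hn : n ≤ Fintype.card ι)
    (ht : Function.Injective t) {V : ι → Set R} (hV : ∀ i, (V i).Countable) :
    {p : R[X] | p.degree < n ∧ ∀ i, p.eval (t i) ∈ V i}.Countable := by
  have hcard : (n : WithBot ℕ) ≤ (Finset.univ : Finset ι).card := by exact_mod_cast hn
  refine Set.MapsTo.countable_of_injOn (t := {v : ι → R | ∀ i, v i ∈ V i})
    (f := fun p i => p.eval (t i)) (fun p hp => hp.2) ?_ (Set.countable_pi hV)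
  intro p hp q hq hpq
  exact eq_of_degrees_lt_of_eval_index_eq Finset.univ ht.injOn (hp.1.trans_le hcard)
    (hq.1.trans_le hcard) fun i _ => congrFun hpq i

variable {L : ι → AddSubgroup (R × R)}

theorem countable_interpolationGroup (hn : n ≤ Fintype.card ι) (ht : Function.Injective t)
    (hL : ∀ i, (L i : Set (R × R)).Countable) :
    (interpolationGroup n t L : Set (R[X] × R[X])).Countable := by
  have hfst := countable_setOf_degree_lt_and_eval_mem hn ht fun i => (hL i).image Prod.fst
  have hsnd := countable_setOf_degree_lt_and_eval_mem hn ht fun i => (hL i).image Prod.snd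
  refine (hfst.prod hsnd).mono fun x hx => ?_
  obtain ⟨⟨hdeg₁, hdeg₂⟩, hval⟩ := mem_interpolationGroup.1 hx
  exact ⟨⟨hdeg₁, fun i => Set.mem_image_of_mem Prod.fst (hval i)⟩,
    ⟨hdeg₂, fun i => Set.mem_image_of_mem Prod.snd (hval i)⟩⟩

theorem countable_exceptional_parameter_set_general {G : AddSubgroup (R[X] × R[X])}
    (hn : n ≤ Fintype.card ι) (ht : Function.Injective t)
    (hL : ∀ i, (L i : Set (R × R)).Countable) (hG : G ≤ interpolationGroup n t L) :
    {s | ∃ x ∈ interpolationGroup n t L, x ∉ G ∧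
        (x.1.eval s, x.2.eval s) ∈ G.map (evalProd s)}.Countable ∧
      ∃ S : Set R, S.Countable ∧ ∀ s ∉ S,
        {x | x ∈ interpolationGroup n t L ∧ (x.1.eval s, x.2.eval s) ∈ G.map (evalProd s)}
          = (G : Set (R[X] × R[X])) := by
  have hcount := countable_interpolationGroup hn ht hL
  have hexc := countable_setOf_exists_notMem_apply_mem_map
    (fun _ hx => (finite_setOf_evalProd_eq_zero hx).countable) hcount (hcount.mono hG)
  exact ⟨hexc, _, hexc, fun s hs => setOf_mem_and_apply_mem_map_eq hG hs⟩

end PolynomialPairs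

section Blanchard

variable (σ₀ σ₁ : ℂ[X])

theorem Gam_eq_map_Gsub (s : ℂ) : Gam σ₀ σ₁ s = (Gsub σ₀ σ₁).map (evalProd s) := by
  rw [Gsub, AddMonoidHom.map_closure, Gam]
  simp [Set.image_insert_eq, evalProd]

theorem countable_Gam (s : ℂ) : (Gam σ₀ σ₁ s : Set (ℂ × ℂ)).Countable :=
  countable_addSubgroup_closure_s3 (Set.toFinite _).countable

theorem Sig_eq_interpolationGroup (a : ℕ) (t : Fin (a + 1) → ℂ) :
    Sig a t σ₀ σ₁ = interpolationGroup (a + 1) t fun i => Gam σ₀ σ₁ (t i) := by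
  rw [Sig, ← degreeLT_succ_eq_degreeLE]
  rfl

variable {σ₀ σ₁}

theorem Gsub_le_interpolationGroup {a : ℕ} (t : Fin (a + 1) → ℂ)
    (h0 : σ₀.degree ≤ (a : WithBot ℕ)) (h1 : σ₁.degree ≤ (a : WithBot ℕ)) :
    Gsub σ₀ σ₁ ≤ interpolationGroup (a + 1) t fun i => Gam σ₀ σ₁ (t i) := by
  rw [← Sig_eq_interpolationGroup]
  refine le_inf ?_ (le_iInf fun i => ?_)
  · rw [Gsub, AddSubgroup.closure_le]
    rintro x (rfl | rfl | rfl | rfl) <;>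
      simp [AddSubgroup.mem_prod, mem_degreeLE, degree_C_mul Complex.I_ne_zero, h0, h1]
  · rw [Gam_eq_map_Gsub]
    exact AddSubgroup.le_comap_map _ _

end Blanchard

/-- The set of points `s ∈ ℂ` at which some pair `(p, q) ∈ Σ ∖ G` takes a
value in the lattice `Γ(s)` is countable; consequently, for every `s` outside a countable
subset of `ℂ`, one has `{ (p, q) ∈ Σ : (p(s), q(s)) ∈ Γ(s) } = G`. -/
theorem countable_exceptional_parameter_set
    (a : ℕ) (ha : 1 ≤ a) (t : Fin (a + 1) → ℂ) (ht : Function.Injective t)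
    (σ₀ σ₁ : Polynomial ℂ)
    (h0 : σ₀.degree ≤ (a : WithBot ℕ)) (h1 : σ₁.degree ≤ (a : WithBot ℕ))
    (hnz : ∀ i, (σ₀.eval (t i), σ₁.eval (t i)) ≠ (0, 0)) :
    Set.Countable {s : ℂ | ∃ x ∈ Sig a t σ₀ σ₁, x ∉ Gsub σ₀ σ₁ ∧
        (x.1.eval s, x.2.eval s) ∈ Gam σ₀ σ₁ s} ∧
      ∃ S : Set ℂ, S.Countable ∧ ∀ s ∉ S,
        {x : Polynomial ℂ × Polynomial ℂ |
            x ∈ Sig a t σ₀ σ₁ ∧ (x.1.eval s, x.2.eval s) ∈ Gam σ₀ σ₁ s}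
          = (Gsub σ₀ σ₁ : Set (Polynomial ℂ × Polynomial ℂ)) := by
  simpa only [Sig_eq_interpolationGroup, Gam_eq_map_Gsub] using
    countable_exceptional_parameter_set_general (Fintype.card_fin (a + 1)).ge ht
      (fun i => countable_Gam σ₀ σ₁ (t i)) (Gsub_le_interpolationGroup t h0 h1)
end

section
/- For every (z, w) ∈ ℂ² with (z, w) ≠ (0, 0), the four vectors (z, w), (i·z, −i·w), (−w, z), (−i·w, −i·z) are linearly independent over ℝ, hence form a basis of ℂ² regarded as a 4-dimensional real vector space; consequently their ℤ-span is a lattice (a discrete additive subgroup of full rank 4) in ℂ² ≅ ℝ⁴. -/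
/-- The four vectors `(z, w)`, `(i·z, −i·w)`, `(−w, z)`, `(−i·w, −i·z)` in `ℂ²`. -/
noncomputable def latticeVecs (z w : ℂ) : Fin 4 → ℂ × ℂ :=
  ![(z, w), (Complex.I * z, -(Complex.I * w)), (-w, z), (-(Complex.I * w), -(Complex.I * z))]

/-!
The four vectors are pairwise orthogonal and of equal length in `ℂ² ≅ ℝ⁴`: with `α = c₀ + i c₁` and
`β = c₂ + i c₃`, the real combination with coefficients `c` is `(αz - βw, ᾱw + β̄z)`, which is the
quaternion product `(α + jβ̄)(z + jw)`, so its squared norm is `(∑ cᵢ²) (|z|² + |w|²)`. Their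
`ℤ`-span is discrete because it is the image of `ℤ⁴` under a linear embedding of `ℝ⁴`.
-/

open Complex (normSq)
open scoped ComplexConjugate

theorem span_addSubgroupClosure {R M : Type*} [Ring R] [AddCommGroup M] [Module R M] (s : Set M) :
    Submodule.span R (AddSubgroup.closure s : Set M) = Submodule.span R s := by
  rw [← Submodule.span_int_eq_addSubgroupClosure, Submodule.coe_toAddSubgroup,
    Submodule.span_span_of_tower]

theorem discreteTopology_addSubgroupClosure_range_of_linearIndependent {ι E : Type*} [Finite ι]
    [AddCommGroup E] [Module ℝ E] [TopologicalSpace E] [IsTopologicalAddGroup E]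
    [ContinuousSMul ℝ E] [T2Space E] {v : ι → E} (hv : LinearIndependent ℝ v) :
    DiscreteTopology (AddSubgroup.closure (Set.range v)) := by
  have := Fintype.ofFinite ι
  let coordMap : (ι → ℝ) →ₗ[ℝ] E := Fintype.linearCombination ℝ v
  have coordMap_isEmbedding : Topology.IsEmbedding coordMap :=
    (LinearMap.isClosedEmbedding_of_injective (LinearMap.ker_eq_bot.mpr
      hv.fintypeLinearCombination_injective)).isEmbedding
  let standardLattice := Submodule.span ℤ (Set.range (Pi.basisFun ℝ ι))
  have standardLattice_discrete : DiscreteTopology (standardLattice : Set (ι → ℝ)) :=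
    ZSpan.discreteTopology_pi_basisFun
  have image_standardLattice :
      coordMap '' standardLattice = (AddSubgroup.closure (Set.range v) : Set E) := by
    have coordMap_comp_basisFun : coordMap ∘ Pi.basisFun ℝ ι = v := by
      classical
      ext i
      simp [coordMap, Fintype.linearCombination_apply_single]
    rw [← Submodule.span_int_eq_addSubgroupClosure, Submodule.coe_toAddSubgroup,
      ← coordMap_comp_basisFun, Set.range_comp]
    exact congrArg SetLike.coe (Submodule.map_span (coordMap.restrictScalars ℤ) _)
  exact ((coordMap_isEmbedding.homeomorphImage standardLattice).trans
    (.setCongr image_standardLattice)).discreteTopology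

theorem normSq_mul_sub_add_normSq_conj_mul_add (α β z w : ℂ) :
    normSq (α * z - β * w) + normSq (conj α * w + conj β * z) =
      (normSq α + normSq β) * (normSq z + normSq w) := by
  simp only [Complex.normSq_apply, Complex.sub_re, Complex.sub_im, Complex.add_re, Complex.add_im,
    Complex.mul_re, Complex.mul_im, Complex.conj_re, Complex.conj_im]
  ring

theorem sum_smul_latticeVecs (z w : ℂ) (c : Fin 4 → ℝ) :
    ∑ i, c i • latticeVecs z w i =
      ((⟨c 0, c 1⟩ : ℂ) * z - ⟨c 2, c 3⟩ * w, conj ⟨c 0, c 1⟩ * w + conj ⟨c 2, c 3⟩ * z) := by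
  ext <;> simp [latticeVecs, Fin.sum_univ_four, Complex.mk_eq_add_mul_I] <;> ring

theorem normSq_add_normSq_sum_smul_latticeVecs (z w : ℂ) (c : Fin 4 → ℝ) :
    normSq (∑ i, c i • latticeVecs z w i).1 + normSq (∑ i, c i • latticeVecs z w i).2 =
      (∑ i, c i ^ 2) * (normSq z + normSq w) := by
  rw [sum_smul_latticeVecs, normSq_mul_sub_add_normSq_conj_mul_add, Complex.normSq_mk,
    Complex.normSq_mk, Fin.sum_univ_four]
  ring

theorem normSq_add_normSq_pos {z w : ℂ} (h : (z, w) ≠ (0, 0)) : 0 < normSq z + normSq w := by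
  rcases not_and_or.mp (mt Prod.mk_eq_zero.mpr h) with hz | hw
  · exact add_pos_of_pos_of_nonneg (Complex.normSq_pos.mpr hz) (Complex.normSq_nonneg w)
  · exact add_pos_of_nonneg_of_pos (Complex.normSq_nonneg z) (Complex.normSq_pos.mpr hw)

theorem linearIndependent_latticeVecs {z w : ℂ} (h : (z, w) ≠ (0, 0)) :
    LinearIndependent ℝ (latticeVecs z w) := by
  rw [Fintype.linearIndependent_iff]
  intro c hc i
  have sum_sq_mul_eq_zero : (∑ j, c j ^ 2) * (normSq z + normSq w) = 0 := by
    rw [← normSq_add_normSq_sum_smul_latticeVecs, hc]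
    simp
  have sum_sq_eq_zero : ∑ j, c j ^ 2 = 0 :=
    (mul_eq_zero.mp sum_sq_mul_eq_zero).resolve_right (normSq_add_normSq_pos h).ne'
  have c_sq_eq_zero : c i ^ 2 = 0 :=
    (Finset.sum_eq_zero_iff_of_nonneg fun j _ ↦ sq_nonneg (c j)).mp sum_sq_eq_zero i
      (Finset.mem_univ i)
  exact sq_eq_zero_iff.mp c_sq_eq_zero

/-- For `(z, w) ≠ (0, 0)` in `ℂ²`, the four vectors `(z, w)`, `(i·z, −i·w)`,
`(−w, z)`, `(−i·w, −i·z)` are linearly independent over `ℝ`, span `ℂ²` as a real vector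
space (hence form a real basis of `ℂ² ≅ ℝ⁴`), and their `ℤ`-span is a lattice: a discrete
additive subgroup of full rank `4` in `ℂ²`. -/
theorem latticeVecs_linearIndependent_span_discrete (z w : ℂ) (h : (z, w) ≠ ((0 : ℂ), (0 : ℂ))) :
    LinearIndependent ℝ (latticeVecs z w) ∧
      Submodule.span ℝ (Set.range (latticeVecs z w)) = ⊤ ∧
      DiscreteTopology ↥(AddSubgroup.closure (Set.range (latticeVecs z w))) ∧
      Submodule.span ℝ
        ((AddSubgroup.closure (Set.range (latticeVecs z w)) : Set (ℂ × ℂ))) = ⊤ := by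
  have linInd : LinearIndependent ℝ (latticeVecs z w) := linearIndependent_latticeVecs h
  have span_eq_top : Submodule.span ℝ (Set.range (latticeVecs z w)) = ⊤ :=
    linInd.span_eq_top_of_card_eq_finrank (by simp [Complex.finrank_real_complex])
  exact ⟨linInd, span_eq_top, discreteTopology_addSubgroupClosure_range_of_linearIndependent linInd,
    (span_addSubgroupClosure _).trans span_eq_top⟩
end
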